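/- Let q be a prime power with q ≥ 5. Set G = C_3 ∗ C_3 and H = PSL(2,q). Then H is a homomorphic image of G (there is a surjective group homomorphism G → H), and there exists a generating pair (h1,h2) of H such that for every group homomorphism θ : G → H and every generating pair (g1,g2) of G one has (θ(g1), θ(g2)) ≠ (h1,h2). -/

import Mathlib

/-- `SL(2,F)` -/
abbrev SL2 (F : Type) [Field F] : Type := Matrix.SpecialLinearGroup (Fin 2) F

/-- `PSL(2,F)`, the quotient of `SL(2,F)` by its centre `{±I}`. -/
abbrev PSL2 (F : Type) [Field F] : Type := SL2 F ⧸ Subgroup.center (SL2 F)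

/-- The cyclic group of order `m`. -/
abbrev Cyc (m : ℕ) : Type := Multiplicative (ZMod m)

/-!
The commutator of two elements `A, B` of `SL(2, R)` satisfies `det (AB - BA) = 2 - tr [A, B]`, and
`CD - DC` is a left multiple of `AB - BA` for all `C, D` in the subgroup generated by `A` and `B`.
So, over a domain, `tr [A, B] - 2` is up to a unit the same for all images of generating pairs of a
group under a fixed representation. For the representations of `C₃ ∗ C₃ = ⟨a, b⟩` with
`tr a = tr b = -1`, taken generically over `ℤ[X]`, this unit is `±1`, and reduction modulo `3` rules
out `-1`: every generating pair has commutator trace `z² - z` with `z = tr (ab)`. As homomorphisms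
from `C₃ ∗ C₃` to `PSL(2, F)` lift to `SL(2, F)` and commutators are insensitive to central factors,
a generating pair of `SL(2, F)` whose commutator trace is not of the form `z² - z` does not lift.

Finite `F` omits a value `z² - z`. If `|F|` is prime, such a pair consists of a transvection and a
monomial matrix; otherwise it contains a generator of the diagonal torus, and a subgroup containing
the torus and some matrix with nonzero entries is everything once it contains a transvection.
-/

section CommutatorTrace

open Matrix
open Matrix.SpecialLinearGroup (coe_mul coe_one SL2_inv_expl)
open scoped MatrixGroups commutatorElement

variable {R S : Type*} [CommRing R] [CommRing S]

/-- The trace of the commutator of two elements of `SL(2, R)`. -/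
def commTrace (A B : SL(2, R)) : R := ⁅A, B⁆.1.trace

theorem coe_inv_eq_trace_smul_sub (A : SL(2, R)) : A⁻¹.1 = A.1.trace • 1 - A.1 := by
  ext i j
  fin_cases i <;> fin_cases j <;> simp [SL2_inv_expl, trace_fin_two]

theorem coe_mul_self_eq_trace_smul_sub (A : SL(2, R)) :
    A.1 * A.1 = A.1.trace • A.1 - 1 := by
  have h : A.1 * A⁻¹.1 = 1 := by rw [← coe_mul, mul_inv_cancel, coe_one]
  rw [coe_inv_eq_trace_smul_sub, mul_sub, mul_smul_comm, mul_one] at h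
  rw [← h, sub_sub_cancel]

theorem det_sub_one (A : SL(2, R)) : (A.1 - 1).det = 2 - A.1.trace := by
  have h := A.2
  simp only [det_fin_two, trace_fin_two] at h ⊢
  simp only [Matrix.sub_apply, one_apply_eq, one_apply_ne zero_ne_one, one_apply_ne one_ne_zero]
  linear_combination h

theorem det_mul_sub_mul (A B : SL(2, R)) :
    (A.1 * B.1 - B.1 * A.1).det = 2 - commTrace A B := by
  have h : ⁅A, B⁆ * (B * A) = A * B := by
    rw [commutatorElement_def]
    group
  rw [← coe_mul, ← coe_mul, ← h, coe_mul, ← sub_one_mul, det_mul, det_sub_one, (B * A).2, mul_one,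
    commTrace]

theorem commTrace_eq (A B : SL(2, R)) :
    commTrace A B = A.1.trace ^ 2 + B.1.trace ^ 2 + (A * B).1.trace ^ 2
      - A.1.trace * B.1.trace * (A * B).1.trace - 2 := by
  have hA := A.2
  have hB := B.2
  have h := det_mul_sub_mul A B
  simp only [det_fin_two, trace_fin_two, Matrix.sub_apply, mul_apply, Fin.sum_univ_two,
    coe_mul] at hA hB h ⊢
  grind

theorem commTrace_map (f : R →+* S) (A B : SL(2, R)) :
    commTrace (Matrix.SpecialLinearGroup.map f A) (Matrix.SpecialLinearGroup.map f B)
      = f (commTrace A B) := by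
  rw [commTrace, ← map_commutatorElement, commTrace, trace_fin_two, trace_fin_two, map_add]
  rfl

theorem commTrace_eq_two_of_commute {A B : SL(2, R)} (h : Commute A B) : commTrace A B = 2 := by
  rw [commTrace, h.commutator_eq, coe_one, trace_one, Fintype.card_fin, Nat.cast_ofNat]

end CommutatorTrace

section Divisibility

open Matrix
open Matrix.SpecialLinearGroup (coe_mul coe_one)
open scoped MatrixGroups

theorem mul_sub_mul_mem_of_mem_closure {G R : Type*} [Group G] [Ring R] (f : G →* R)
    {I : Ideal R} {s : Set G} (hI : ∀ g ∈ Subgroup.closure s, ∀ x ∈ I, x * f g ∈ I) {r : R}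
    (hr : ∀ g ∈ s, f g * r - r * f g ∈ I) {g : G} (hg : g ∈ Subgroup.closure s) :
    f g * r - r * f g ∈ I := by
  induction hg using Subgroup.closure_induction with
  | mem g hg => exact hr g hg
  | one => simp
  | mul g h _ hh ihg ihh =>
    have e : f (g * h) * r - r * f (g * h)
        = f g * (f h * r - r * f h) + (f g * r - r * f g) * f h := by
      rw [map_mul]
      noncomm_ring
    rw [e]
    exact I.add_mem (I.mul_mem_left _ ihh) (hI h hh _ ihg)
  | inv g hg ih =>
    have e : f g⁻¹ * r - r * f g⁻¹ = -(f g⁻¹ * (f g * r - r * f g) * f g⁻¹) := by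
      have hl : f g⁻¹ * f g = 1 := by rw [← map_mul, inv_mul_cancel, map_one]
      have hr : f g * f g⁻¹ = 1 := by rw [← map_mul, mul_inv_cancel, map_one]
      rw [mul_sub, sub_mul, ← mul_assoc, hl, one_mul, mul_assoc, mul_assoc, hr, mul_one, neg_sub]
    rw [e]
    exact I.neg_mem (hI _ (inv_mem hg) _ (I.mul_mem_left _ ih))

variable {R : Type*} [CommRing R]

theorem mul_sub_mul_mul_left (A B : SL(2, R)) :
    (A.1 * B.1 - B.1 * A.1) * A.1 = A⁻¹.1 * (A.1 * B.1 - B.1 * A.1) := by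
  rw [coe_inv_eq_trace_smul_sub, sub_mul, sub_mul, smul_mul_assoc, one_mul, mul_sub, ← mul_assoc,
    coe_mul_self_eq_trace_smul_sub, mul_assoc B.1, coe_mul_self_eq_trace_smul_sub,
    mul_sub, sub_mul, mul_smul_comm, smul_mul_assoc, smul_sub, mul_assoc]
  noncomm_ring

theorem mul_sub_mul_mul_right (A B : SL(2, R)) :
    (A.1 * B.1 - B.1 * A.1) * B.1 = B⁻¹.1 * (A.1 * B.1 - B.1 * A.1) := by
  rw [← neg_sub, neg_mul, mul_sub_mul_mul_left, mul_neg]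

theorem mul_mem_span_of_mem_closure {X Y A : SL(2, R)} (hA : A ∈ Subgroup.closure {X, Y}) :
    ∀ N ∈ Ideal.span {X.1 * Y.1 - Y.1 * X.1}, N * A.1 ∈ Ideal.span {X.1 * Y.1 - Y.1 * X.1} := by
  induction hA using Subgroup.closure_induction with
  | one => exact fun N hN => by rwa [coe_one, mul_one]
  | mul A B _ _ ihA ihB =>
    exact fun N hN => by simpa only [coe_mul, mul_assoc] using ihB _ (ihA N hN)
  | inv A _ ih =>
    intro N hN
    rw [coe_inv_eq_trace_smul_sub, mul_sub, mul_smul_comm, mul_one]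
    exact sub_mem (Submodule.smul_of_tower_mem _ _ hN) (ih N hN)
  | mem A hA =>
    intro N hN
    obtain ⟨M, rfl⟩ := Ideal.mem_span_singleton'.1 hN
    have key : (X.1 * Y.1 - Y.1 * X.1) * A.1 = A⁻¹.1 * (X.1 * Y.1 - Y.1 * X.1) := by
      rcases hA with rfl | rfl
      exacts [mul_sub_mul_mul_left .., mul_sub_mul_mul_right ..]
    rw [mul_assoc, key, ← mul_assoc]
    exact Ideal.mul_mem_left _ _ (Ideal.mem_span_singleton_self _)

theorem mul_sub_mul_mem_span_of_mem_closure {X Y A B : SL(2, R)}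
    (hA : A ∈ Subgroup.closure {X, Y}) (hB : B ∈ Subgroup.closure {X, Y}) :
    A.1 * B.1 - B.1 * A.1 ∈ Ideal.span {X.1 * Y.1 - Y.1 * X.1} := by
  have h (N) := mul_sub_mul_mem_of_mem_closure (r := N) (SpecialLinearGroup.coeMonoidHom (R := R))
    fun C (hC : C ∈ Subgroup.closure {X, Y}) => mul_mem_span_of_mem_closure hC
  have hcomm (C) (hC : C ∈ ({X, Y} : Set SL(2, R))) (D) (hD : D ∈ ({X, Y} : Set SL(2, R))) :
      C.1 * D.1 - D.1 * C.1 ∈ Ideal.span {X.1 * Y.1 - Y.1 * X.1} := by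
    rcases hC with rfl | rfl <;> rcases hD with rfl | rfl
    · simp
    · exact Ideal.mem_span_singleton_self _
    · exact sub_mem_comm_iff.1 (Ideal.mem_span_singleton_self _)
    · simp
  exact h _ (fun C hC => sub_mem_comm_iff.1 (h _ (fun D hD => hcomm D hD C hC) hB)) hA

theorem commTrace_sub_two_dvd {X Y A B : SL(2, R)} (hA : A ∈ Subgroup.closure {X, Y})
    (hB : B ∈ Subgroup.closure {X, Y}) : commTrace X Y - 2 ∣ commTrace A B - 2 := by
  obtain ⟨M, hM⟩ := Ideal.mem_span_singleton'.1 (mul_sub_mul_mem_span_of_mem_closure hA hB)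
  rw [← neg_dvd, ← dvd_neg, neg_sub, neg_sub, ← det_mul_sub_mul, ← det_mul_sub_mul, ← hM, det_mul]
  exact dvd_mul_left _ _

end Divisibility

section TracePolynomial

open Matrix
open MvPolynomial (X aeval)
open Matrix.SpecialLinearGroup (coe_mul coe_one)
open scoped MatrixGroups

section Span

variable {R : Type*} [CommRing R]

/-- The combination of the matrices `1, A, B, AB` with coefficients `p, q, r, s`. -/
def wordCombination (A B : SL(2, R)) (p q r s : R) : Matrix (Fin 2) (Fin 2) R :=
  p • 1 + q • A.1 + r • B.1 + s • (A.1 * B.1)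

theorem wordCombination_mul_left (A B : SL(2, R)) (p q r s : R) :
    wordCombination A B p q r s * A.1 = wordCombination A B
      (-q + r * ((A * B).1.trace - A.1.trace * B.1.trace) - s * B.1.trace)
      (p + q * A.1.trace + r * B.1.trace + s * (A * B).1.trace) (r * A.1.trace + s) (-r) := by
  have hA := A.2
  have hB := B.2
  rw [det_fin_two] at hA hB
  ext i j
  fin_cases i <;> fin_cases j <;>
    simp [wordCombination, mul_apply, trace_fin_two, Fin.sum_univ_two] <;> grind

theorem wordCombination_mul_right (A B : SL(2, R)) (p q r s : R) :
    wordCombination A B p q r s * B.1 =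
      wordCombination A B (-r) (-s) (p + r * B.1.trace) (q + s * B.1.trace) := by
  have hB := coe_mul_self_eq_trace_smul_sub B
  simp only [wordCombination, add_mul, smul_mul_assoc, mul_assoc, hB, one_mul, mul_sub,
    mul_smul_comm, mul_one]
  module

end Span

variable {G : Type*} [Group G]

/-- The traces of `ρ a`, `ρ b` and `ρ (a * b)`. -/
def traceTriple {R : Type*} [CommRing R] (ρ : G →* SL(2, R)) (a b : G) : Fin 3 → R :=
  ![(ρ a).1.trace, (ρ b).1.trace, (ρ (a * b)).1.trace]

/-- `ρ g` is a combination of `1, ρ a, ρ b, ρ a * ρ b` whose coefficients are integral polynomials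
in the traces of `ρ a`, `ρ b`, `ρ (a * b)`, the same ones for every representation `ρ`. -/
def HasTraceCoordinates (a b g : G) : Prop :=
  ∃ p q r s : MvPolynomial (Fin 3) ℤ, ∀ (R : Type) [CommRing R] (ρ : G →* SL(2, R)),
    (ρ g).1 = wordCombination (ρ a) (ρ b) (aeval (traceTriple ρ a b) p)
      (aeval (traceTriple ρ a b) q) (aeval (traceTriple ρ a b) r) (aeval (traceTriple ρ a b) s)

variable {a b g : G}

theorem HasTraceCoordinates.one : HasTraceCoordinates a b 1 := by
  refine ⟨1, 0, 0, 0, fun R _ ρ => ?_⟩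
  simp [wordCombination]

theorem HasTraceCoordinates.mul_left (h : HasTraceCoordinates a b g) :
    HasTraceCoordinates a b (g * a) := by
  obtain ⟨p, q, r, s, h⟩ := h
  refine ⟨-q + r * (X 2 - X 0 * X 1) - s * X 1, p + q * X 0 + r * X 1 + s * X 2,
    r * X 0 + s, -r, fun R _ ρ => ?_⟩
  rw [map_mul, coe_mul, h, wordCombination_mul_left]
  simp [traceTriple]

theorem HasTraceCoordinates.mul_right (h : HasTraceCoordinates a b g) :
    HasTraceCoordinates a b (g * b) := by
  obtain ⟨p, q, r, s, h⟩ := h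
  refine ⟨-r, -s, p + r * X 1, q + s * X 1, fun R _ ρ => ?_⟩
  rw [map_mul, coe_mul, h, wordCombination_mul_right]
  simp [traceTriple]

theorem HasTraceCoordinates.mul_inv {c : G} {t : MvPolynomial (Fin 3) ℤ}
    (ht : ∀ (R : Type) [CommRing R] (ρ : G →* SL(2, R)),
      (ρ c).1.trace = aeval (traceTriple ρ a b) t)
    (h : HasTraceCoordinates a b g) (hc : HasTraceCoordinates a b (g * c)) :
    HasTraceCoordinates a b (g * c⁻¹) := by
  obtain ⟨p, q, r, s, h⟩ := h
  obtain ⟨p', q', r', s', hc⟩ := hc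
  refine ⟨t * p - p', t * q - q', t * r - r', t * s - s', fun R _ ρ => ?_⟩
  have e : (ρ (g * c⁻¹)).1 = (ρ c).1.trace • (ρ g).1 - (ρ (g * c)).1 := by
    rw [map_mul, map_inv, coe_mul, coe_inv_eq_trace_smul_sub, mul_sub, mul_smul_comm, mul_one,
      map_mul, coe_mul]
  rw [e, h, hc, ht]
  simp only [wordCombination, map_sub, map_mul]
  module

theorem hasTraceCoordinates_of_mem_closure (hg : g ∈ Subgroup.closure {a, b}) :
    HasTraceCoordinates a b g := by
  induction hg using Subgroup.closure_induction_right with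
  | one => exact .one
  | mul_right g _ c hc ih => rcases hc with rfl | rfl; exacts [ih.mul_left, ih.mul_right]
  | mul_inv_cancel g _ c hc ih =>
    rcases hc with rfl | rfl
    · exact ih.mul_inv (t := X 0) (fun R _ ρ => by simp [traceTriple]) ih.mul_left
    · exact ih.mul_inv (t := X 1) (fun R _ ρ => by simp [traceTriple]) ih.mul_right

theorem exists_trace_eq_aeval (hg : g ∈ Subgroup.closure {a, b}) :
    ∃ P : MvPolynomial (Fin 3) ℤ, ∀ (R : Type) [CommRing R] (ρ : G →* SL(2, R)),
      (ρ g).1.trace = aeval (traceTriple ρ a b) P := by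
  obtain ⟨p, q, r, s, h⟩ := hasTraceCoordinates_of_mem_closure hg
  refine ⟨2 * p + q * X 0 + r * X 1 + s * X 2, fun R _ ρ => ?_⟩
  rw [h, wordCombination]
  simp only [traceTriple, map_mul, map_add, coe_mul, trace_add, trace_smul, trace_one,
    Fintype.card_fin, Nat.cast_ofNat, smul_eq_mul, MvPolynomial.aeval_ofNat, MvPolynomial.aeval_X,
    cons_val_zero, cons_val_one, cons_val]
  ring

end TracePolynomial

section CyclicCoprod

open Monoid (Coprod)

variable {m n : ℕ} {H : Type*} [Group H]

/-- The homomorphism from `Cyc m` sending the generator `1` of `ZMod m` to `h`. -/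
def cycLift (h : H) (hh : h ^ m = 1) : Cyc m →* H :=
  AddMonoidHom.toMultiplicativeLeft (ZMod.lift m ⟨zmultiplesHom (Additive H) (Additive.ofMul h), by
    rw [zmultiplesHom_apply, natCast_zsmul, ← ofMul_pow, hh, ofMul_one]⟩)

theorem cycLift_ofAdd_one (h : H) (hh : h ^ m = 1) :
    cycLift h hh (Multiplicative.ofAdd 1) = h := by
  change Additive.toMul (ZMod.lift m _ 1) = h
  rw [← Int.cast_one, ZMod.lift_coe, zmultiplesHom_apply, one_zsmul, toMul_ofMul]

theorem ofAdd_one_pow_self : (Multiplicative.ofAdd 1 : Cyc m) ^ m = 1 := by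
  rw [← ofAdd_nsmul, nsmul_one, ZMod.natCast_self, ofAdd_zero]

theorem mem_zpowers_ofAdd_one (x : Cyc m) : x ∈ Subgroup.zpowers (Multiplicative.ofAdd 1 : Cyc m) :=
  ⟨(Multiplicative.toAdd x).cast, by simp [← ofAdd_zsmul]⟩

variable (m n) in
/-- The generator of the first factor of `Cyc m ∗ Cyc n`. -/
def inlGen : Coprod (Cyc m) (Cyc n) := Coprod.inl (Multiplicative.ofAdd 1)

variable (m n) in
/-- The generator of the second factor of `Cyc m ∗ Cyc n`. -/
def inrGen : Coprod (Cyc m) (Cyc n) := Coprod.inr (Multiplicative.ofAdd 1)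

theorem inlGen_pow : inlGen m n ^ m = 1 := by
  rw [inlGen, ← map_pow, ofAdd_one_pow_self, map_one]

theorem inrGen_pow : inrGen m n ^ n = 1 := by
  rw [inrGen, ← map_pow, ofAdd_one_pow_self, map_one]

theorem closure_inlGen_inrGen : Subgroup.closure {inlGen m n, inrGen m n} = ⊤ := by
  rw [eq_top_iff, ← Coprod.range_inl_sup_range_inr, sup_le_iff]
  constructor <;> rintro _ ⟨x, rfl⟩ <;> obtain ⟨k, rfl⟩ := mem_zpowers_ofAdd_one x <;>
    rw [map_zpow] <;> refine zpow_mem (Subgroup.subset_closure ?_) k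
  exacts [Set.mem_insert _ _, Set.mem_insert_of_mem _ rfl]

theorem coprodCyc_hom_ext {f g : Coprod (Cyc m) (Cyc n) →* H}
    (hl : f (inlGen m n) = g (inlGen m n)) (hr : f (inrGen m n) = g (inrGen m n)) : f = g := by
  refine MonoidHom.eq_of_eqOn_dense closure_inlGen_inrGen ?_
  rintro x (rfl | rfl)
  exacts [hl, hr]

/-- The homomorphism from `Cyc m ∗ Cyc n` sending the two generators to `h` and `k`. -/
def coprodCycLift (h k : H) (hh : h ^ m = 1) (hk : k ^ n = 1) : Coprod (Cyc m) (Cyc n) →* H :=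
  Coprod.lift (cycLift h hh) (cycLift k hk)

theorem coprodCycLift_inlGen (h k : H) (hh : h ^ m = 1) (hk : k ^ n = 1) :
    coprodCycLift h k hh hk (inlGen m n) = h := by
  rw [coprodCycLift, inlGen, Coprod.lift_apply_inl, cycLift_ofAdd_one]

theorem coprodCycLift_inrGen (h k : H) (hh : h ^ m = 1) (hk : k ^ n = 1) :
    coprodCycLift h k hh hk (inrGen m n) = k := by
  rw [coprodCycLift, inrGen, Coprod.lift_apply_inr, cycLift_ofAdd_one]

theorem map_mem_closure_pair {G : Type*} [Group G] (f : G →* H) {x y : G}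
    (h : Subgroup.closure {x, y} = ⊤) (g : G) : f g ∈ Subgroup.closure {f x, f y} := by
  rw [← Set.image_pair, ← MonoidHom.map_closure, h]
  exact Subgroup.mem_map_of_mem f (Subgroup.mem_top g)

theorem closure_mk_pair_eq_top {G : Type*} [Group G] {N : Subgroup G} [N.Normal] {A B : G}
    (h : Subgroup.closure {A, B} = ⊤) :
    Subgroup.closure {(A : G ⧸ N), (B : G ⧸ N)} = ⊤ := by
  rw [eq_top_iff]
  rintro ⟨g⟩ -
  exact map_mem_closure_pair (QuotientGroup.mk' N) h g

theorem surjective_coprodCycLift {h k : H} (hh : h ^ m = 1) (hk : k ^ n = 1)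
    (htop : Subgroup.closure {h, k} = ⊤) : Function.Surjective (coprodCycLift h k hh hk) := by
  rw [← MonoidHom.range_eq_top, MonoidHom.range_eq_map, ← closure_inlGen_inrGen,
    MonoidHom.map_closure, Set.image_pair, coprodCycLift_inlGen, coprodCycLift_inrGen, htop]

end CyclicCoprod

section OrderThree

open Matrix
open Matrix.SpecialLinearGroup (coe_mul coe_one)
open scoped MatrixGroups

theorem pow_three_eq_one_of_trace_eq_neg_one {R : Type*} [CommRing R] {A : SL(2, R)}
    (h : A.1.trace = -1) : A ^ 3 = 1 := by
  have hA := coe_mul_self_eq_trace_smul_sub A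
  apply Subtype.ext
  rw [pow_three, coe_mul, coe_mul, hA, h, neg_one_smul, mul_sub, mul_neg, hA, h, coe_one]
  simp

theorem eq_one_or_trace_eq_neg_one {F : Type*} [Field F] {A : SL(2, F)} (h : A ^ 3 = 1) :
    A = 1 ∨ A.1.trace = -1 := by
  have hA := coe_mul_self_eq_trace_smul_sub A
  have hinv : A⁻¹ = A * A := inv_eq_of_mul_eq_one_right (by rw [← pow_three, h])
  have key : (A.1.trace + 1) • (A.1 - 1) = 0 := by
    rw [add_smul, one_smul, smul_sub, ← sub_eq_zero.2 (congrArg Subtype.val hinv.symm), coe_mul,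
      coe_inv_eq_trace_smul_sub, hA]
    abel
  rcases smul_eq_zero.1 key with h | h
  exacts [.inr (eq_neg_of_add_eq_zero_left h), .inl (Subtype.ext (sub_eq_zero.1 h))]

end OrderThree

section StandardRepresentation

open Matrix
open Matrix.SpecialLinearGroup (coe_mul coe_one)
open scoped MatrixGroups

variable {R S : Type*} [CommRing R] [CommRing S]

/-- The matrix of trace `-1` in `SL(2, R)` with lower left entry `1` and upper left entry `p`. -/
def traceNegOne (p : R) : SL(2, R) :=
  ⟨!![p, -(p ^ 2 + p + 1); 1, -1 - p], by rw [det_fin_two_of]; ring⟩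

theorem coe_traceNegOne (p : R) : (traceNegOne p).1 = !![p, -(p ^ 2 + p + 1); 1, -1 - p] := rfl

theorem trace_traceNegOne (p : R) : (traceNegOne p).1.trace = -1 := by
  rw [coe_traceNegOne, trace_fin_two_of, add_sub_cancel]

theorem traceNegOne_pow_three (p : R) : traceNegOne p ^ 3 = 1 :=
  pow_three_eq_one_of_trace_eq_neg_one (trace_traceNegOne p)

theorem trace_traceNegOne_zero_mul (p : R) :
    (traceNegOne 0 * traceNegOne p).1.trace = -1 - p ^ 2 := by
  rw [coe_mul, coe_traceNegOne, coe_traceNegOne, mul_fin_two, trace_fin_two_of]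
  ring

theorem map_traceNegOne (f : R →+* S) (p : R) :
    Matrix.SpecialLinearGroup.map f (traceNegOne p) = traceNegOne (f p) := by
  ext i j
  rw [Matrix.SpecialLinearGroup.map_apply_coe, traceNegOne, traceNegOne]
  fin_cases i <;> fin_cases j <;> simp

/-- The representation of `C₃ ∗ C₃` by matrices of trace `-1` in which the product of the two
generators has trace `-1 - p ^ 2`. -/
def stdRep (p : R) : Monoid.Coprod (Cyc 3) (Cyc 3) →* SL(2, R) :=
  coprodCycLift (traceNegOne 0) (traceNegOne p) (traceNegOne_pow_three 0) (traceNegOne_pow_three p)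

theorem map_stdRep (f : R →+* S) (p : R) (g : Monoid.Coprod (Cyc 3) (Cyc 3)) :
    Matrix.SpecialLinearGroup.map f (stdRep p g) = stdRep (f p) g := by
  have h : (Matrix.SpecialLinearGroup.map f).comp (stdRep p) = stdRep (f p) := by
    apply coprodCyc_hom_ext
    · simp only [MonoidHom.comp_apply, stdRep, coprodCycLift_inlGen, map_traceNegOne, map_zero]
    · simp only [MonoidHom.comp_apply, stdRep, coprodCycLift_inrGen, map_traceNegOne]
  exact DFunLike.congr_fun h g

theorem traceTriple_of_trace_eq_neg_one {ρ : Monoid.Coprod (Cyc 3) (Cyc 3) →* SL(2, R)}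
    (ha : (ρ (inlGen 3 3)).1.trace = -1) (hb : (ρ (inrGen 3 3)).1.trace = -1) :
    traceTriple ρ (inlGen 3 3) (inrGen 3 3)
      = ![-1, -1, (ρ (inlGen 3 3 * inrGen 3 3)).1.trace] := by
  rw [traceTriple, ha, hb]

theorem traceTriple_stdRep (p : R) :
    traceTriple (stdRep p) (inlGen 3 3) (inrGen 3 3) = ![-1, -1, -1 - p ^ 2] := by
  rw [traceTriple, map_mul, stdRep, coprodCycLift_inlGen, coprodCycLift_inrGen,
    trace_traceNegOne, trace_traceNegOne, trace_traceNegOne_zero_mul]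

theorem commTrace_traceNegOne (p : R) :
    commTrace (traceNegOne 0) (traceNegOne p) = (-1 - p ^ 2) ^ 2 - (-1 - p ^ 2) := by
  rw [commTrace_eq, trace_traceNegOne, trace_traceNegOne, trace_traceNegOne_zero_mul]
  ring

end StandardRepresentation

section GeneratingPairs

open Matrix Polynomial
open Matrix.SpecialLinearGroup (coe_mul coe_one)
open scoped MatrixGroups commutatorElement

theorem associated_commTrace_sub_two {G R : Type*} [Group G] [CommRing R] [IsDomain R]
    (ρ : G →* SL(2, R)) {a b c d : G} (hab : Subgroup.closure {a, b} = ⊤)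
    (hcd : Subgroup.closure {c, d} = ⊤) :
    Associated (commTrace (ρ a) (ρ b) - 2) (commTrace (ρ c) (ρ d) - 2) :=
  associated_of_dvd_dvd
    (commTrace_sub_two_dvd (map_mem_closure_pair ρ hab c) (map_mem_closure_pair ρ hab d))
    (commTrace_sub_two_dvd (map_mem_closure_pair ρ hcd a) (map_mem_closure_pair ρ hcd b))

theorem pow_four_eq_one_of_commTrace_eq_one :
    ∀ A B : SL(2, ZMod 3), commTrace A B = 1 → A ^ 4 = 1 ∧ B ^ 4 = 1 := by
  decide +kernel

-- The elements of order dividing `4` form a subgroup, the normal Sylow subgroup `Q₈`.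
theorem mul_pow_four_eq_one_of_zmod_three :
    ∀ A B : SL(2, ZMod 3), A ^ 4 = 1 → B ^ 4 = 1 → (A * B) ^ 4 = 1 := by
  decide +kernel

theorem pow_four_eq_one_of_mem_closure {A B C : SL(2, ZMod 3)} (h : commTrace A B = 1)
    (hC : C ∈ Subgroup.closure {A, B}) : C ^ 4 = 1 := by
  have hAB := pow_four_eq_one_of_commTrace_eq_one A B h
  induction hC using Subgroup.closure_induction with
  | mem C hC => rcases hC with rfl | rfl; exacts [hAB.1, hAB.2]
  | one => exact one_pow 4
  | mul C D _ _ ihC ihD => exact mul_pow_four_eq_one_of_zmod_three C D ihC ihD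
  | inv C _ ih => rw [inv_pow, ih, inv_one]

theorem eq_or_eq_neg_of_associated {p q : ℤ[X]} (h : Associated p q) : q = p ∨ q = -p := by
  obtain ⟨u, rfl⟩ := h
  obtain ⟨r, hr, hu⟩ := Polynomial.isUnit_iff.1 u.isUnit
  rcases Int.isUnit_iff.1 hr with rfl | rfl <;> simp [← hu]

variable {g₁ g₂ : Monoid.Coprod (Cyc 3) (Cyc 3)}

theorem commTrace_stdRep_generators {R : Type*} [CommRing R] (p : R) :
    commTrace (stdRep p (inlGen 3 3)) (stdRep p (inrGen 3 3))
      = (-1 - p ^ 2) ^ 2 - (-1 - p ^ 2) := by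
  rw [stdRep, coprodCycLift_inlGen, coprodCycLift_inrGen, commTrace_traceNegOne]

theorem commTrace_stdRep_one_ne_one (h : Subgroup.closure {g₁, g₂} = ⊤) :
    commTrace (stdRep (1 : ZMod 3) g₁) (stdRep 1 g₂) ≠ 1 := by
  intro h1
  have h4 := pow_four_eq_one_of_mem_closure h1 (map_mem_closure_pair _ h (inlGen 3 3))
  rw [stdRep, coprodCycLift_inlGen] at h4
  exact absurd h4 (by decide)

theorem commTrace_stdRep_X (h : Subgroup.closure {g₁, g₂} = ⊤) :
    commTrace (stdRep (X : ℤ[X]) g₁) (stdRep X g₂) = (-1 - X ^ 2) ^ 2 - (-1 - X ^ 2) := by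
  have hassoc := associated_commTrace_sub_two (stdRep (X : ℤ[X])) closure_inlGen_inrGen h
  rw [commTrace_stdRep_generators] at hassoc
  refine (eq_or_eq_neg_of_associated hassoc).elim sub_left_injective.eq_iff.1 fun hneg => ?_
  refine absurd ?_ (commTrace_stdRep_one_ne_one h)
  let φ : ℤ[X] →+* ZMod 3 := eval₂RingHom (Int.castRingHom (ZMod 3)) 1
  have hX : φ X = 1 := eval₂_X _ _
  have hφ := congrArg φ hneg
  rw [map_sub, ← commTrace_map, map_stdRep, map_stdRep, hX, map_neg, map_sub, map_sub, map_pow,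
    map_sub, map_neg, map_one, map_pow, hX, map_ofNat, sub_eq_iff_eq_add] at hφ
  rw [hφ]
  decide

theorem exists_commTrace_eq_aeval {G : Type*} [Group G] {a b : G}
    (hab : Subgroup.closure {a, b} = ⊤) (c d : G) :
    ∃ P : MvPolynomial (Fin 3) ℤ, ∀ (R : Type) [CommRing R] (ρ : G →* SL(2, R)),
      commTrace (ρ c) (ρ d) = MvPolynomial.aeval (traceTriple ρ a b) P := by
  have h := exists_trace_eq_aeval (hab ▸ Subgroup.mem_top ⁅c, d⁆)
  simpa only [map_commutatorElement, commTrace] using h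

theorem eq_of_comp_neg_one_sub_sq {p q : ℤ[X]}
    (h : p.comp (-1 - X ^ 2) = q.comp (-1 - X ^ 2)) : p = q := by
  rw [← sub_eq_zero, ← sub_comp, comp_eq_zero_iff] at h
  rcases h with h | ⟨-, h⟩
  · exact sub_eq_zero.1 h
  · have := congrArg (coeff · 2) h
    simp [coeff_one] at this

theorem commTrace_eq_sq_sub (h : Subgroup.closure {g₁, g₂} = ⊤) {R : Type} [CommRing R]
    (ρ : Monoid.Coprod (Cyc 3) (Cyc 3) →* SL(2, R)) (ha : (ρ (inlGen 3 3)).1.trace = -1)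
    (hb : (ρ (inrGen 3 3)).1.trace = -1) :
    commTrace (ρ g₁) (ρ g₂)
      = (ρ (inlGen 3 3 * inrGen 3 3)).1.trace ^ 2 - (ρ (inlGen 3 3 * inrGen 3 3)).1.trace := by
  obtain ⟨P, hP⟩ := exists_commTrace_eq_aeval closure_inlGen_inrGen g₁ g₂
  have hspec {S : Type} [CommRing S] (z : S) : MvPolynomial.aeval ![-1, -1, z] P
      = aeval z (MvPolynomial.aeval ![-1, -1, (X : ℤ[X])] P) := by
    rw [MvPolynomial.comp_aeval_apply]
    congr 2
    ext i
    fin_cases i <;> simp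
  have hQ : MvPolynomial.aeval ![-1, -1, (X : ℤ[X])] P = X ^ 2 - X := by
    apply eq_of_comp_neg_one_sub_sq
    rw [sub_comp, pow_comp, X_comp, ← commTrace_stdRep_X h, hP, traceTriple_stdRep, hspec,
      aeval_def, Polynomial.comp]
    exact congrArg (eval₂ · _ _) (Subsingleton.elim _ _)
  rw [hP, traceTriple_of_trace_eq_neg_one ha hb, hspec, hQ]
  simp

theorem exists_commTrace_eq_sq_sub (h : Subgroup.closure {g₁, g₂} = ⊤) {F : Type} [Field F]
    (ρ : Monoid.Coprod (Cyc 3) (Cyc 3) →* SL(2, F)) :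
    ∃ z, commTrace (ρ g₁) (ρ g₂) = z ^ 2 - z := by
  have ha : ρ (inlGen 3 3) ^ 3 = 1 := by rw [← map_pow, inlGen_pow, map_one]
  have hb : ρ (inrGen 3 3) ^ 3 = 1 := by rw [← map_pow, inrGen_pow, map_one]
  have hcomm (hc : Commute (ρ (inlGen 3 3)) (ρ (inrGen 3 3))) :
      ∃ z, commTrace (ρ g₁) (ρ g₂) = z ^ 2 - z := by
    refine ⟨2, ?_⟩
    have hd := commTrace_sub_two_dvd (map_mem_closure_pair ρ closure_inlGen_inrGen g₁)
      (map_mem_closure_pair ρ closure_inlGen_inrGen g₂)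
    rw [commTrace_eq_two_of_commute hc, sub_self, zero_dvd_iff] at hd
    linear_combination hd
  rcases eq_one_or_trace_eq_neg_one ha with ha | ha
  · exact hcomm (ha ▸ Commute.one_left _)
  rcases eq_one_or_trace_eq_neg_one hb with hb | hb
  · exact hcomm (hb ▸ Commute.one_right _)
  exact ⟨_, commTrace_eq_sq_sub h ρ ha hb⟩

end GeneratingPairs

section CentralQuotient

open scoped commutatorElement

variable {G : Type*} [Group G]

theorem exists_pow_eq_one_and_mk_eq {N : Subgroup G} [N.Normal] (hN : ∀ c ∈ N, c ^ 2 = 1) {n : ℕ}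
    (hn : Odd n) {h : G ⧸ N} (hh : h ^ n = 1) : ∃ g : G, g ^ n = 1 ∧ (g : G ⧸ N) = h := by
  obtain ⟨g, rfl⟩ := QuotientGroup.mk_surjective h
  obtain ⟨k, hk⟩ := hn.add_one.two_dvd
  refine ⟨g ^ (n + 1), ?_, ?_⟩
  · have hg : g ^ n ∈ N := (QuotientGroup.eq_one_iff _).1 hh
    rw [← pow_mul, mul_comm, pow_mul, hk, pow_mul, hN _ hg, one_pow]
  · rw [pow_succ, QuotientGroup.mk_mul, QuotientGroup.mk_pow, hh, one_mul]

theorem exists_mk'_comp_eq {N : Subgroup G} [N.Normal] (hN : ∀ c ∈ N, c ^ 2 = 1) {m n : ℕ}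
    (hm : Odd m) (hn : Odd n) (θ : Monoid.Coprod (Cyc m) (Cyc n) →* G ⧸ N) :
    ∃ ρ : Monoid.Coprod (Cyc m) (Cyc n) →* G, (QuotientGroup.mk' N).comp ρ = θ := by
  obtain ⟨g, hg, hgθ⟩ := exists_pow_eq_one_and_mk_eq hN hm (h := θ (inlGen m n))
    (by rw [← map_pow, inlGen_pow, map_one])
  obtain ⟨k, hk, hkθ⟩ := exists_pow_eq_one_and_mk_eq hN hn (h := θ (inrGen m n))
    (by rw [← map_pow, inrGen_pow, map_one])
  refine ⟨coprodCycLift g k hg hk, coprodCyc_hom_ext ?_ ?_⟩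
  · rw [MonoidHom.comp_apply, coprodCycLift_inlGen, QuotientGroup.mk'_apply, hgθ]
  · rw [MonoidHom.comp_apply, coprodCycLift_inrGen, QuotientGroup.mk'_apply, hkθ]

theorem mul_commutatorElement_of_mem_center (a b : G) {c : G} (hc : c ∈ Subgroup.center G) :
    ⁅a * c, b⁆ = ⁅a, b⁆ := by
  have h : c * b * c⁻¹ = b := by rw [← Subgroup.mem_center_iff.1 hc b, mul_inv_cancel_right]
  rw [commutatorElement_def, commutatorElement_def, mul_inv_rev]
  simp only [mul_assoc] at h ⊢
  rw [← mul_assoc c b, ← mul_assoc (c * b), mul_assoc c b, h]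

theorem commutatorElement_eq_of_mk_center_eq {a b c d : G}
    (hac : (a : G ⧸ Subgroup.center G) = c) (hbd : (b : G ⧸ Subgroup.center G) = d) :
    ⁅a, b⁆ = ⁅c, d⁆ := by
  rw [← mul_inv_cancel_left a c, ← mul_inv_cancel_left b d,
    mul_commutatorElement_of_mem_center _ _ (QuotientGroup.eq.1 hac), ← commutatorElement_inv b,
    ← commutatorElement_inv _ a, mul_commutatorElement_of_mem_center _ _ (QuotientGroup.eq.1 hbd)]

end CentralQuotient

section Lifting

open Matrix
open scoped MatrixGroups

theorem pow_card_eq_one_of_mem_center {R n : Type*} [CommRing R] [DecidableEq n] [Fintype n]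
    {A : Matrix.SpecialLinearGroup n R} (hA : A ∈ Subgroup.center (Matrix.SpecialLinearGroup n R)) :
    A ^ Fintype.card n = 1 := by
  obtain ⟨r, hr, hA⟩ := Matrix.SpecialLinearGroup.mem_center_iff.1 hA
  apply Subtype.ext
  rw [Matrix.SpecialLinearGroup.coe_pow, ← hA, ← map_pow, hr, map_one,
    Matrix.SpecialLinearGroup.coe_one]

theorem exists_commTrace_eq_sq_sub_of_mk_eq {F : Type} [Field F]
    {g₁ g₂ : Monoid.Coprod (Cyc 3) (Cyc 3)} (h : Subgroup.closure {g₁, g₂} = ⊤)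
    (θ : Monoid.Coprod (Cyc 3) (Cyc 3) →* PSL2 F) {A B : SL2 F} (hA : θ g₁ = A) (hB : θ g₂ = B) :
    ∃ z, commTrace A B = z ^ 2 - z := by
  have h3 : Odd 3 := by decide
  obtain ⟨ρ, rfl⟩ := exists_mk'_comp_eq (fun _ => pow_card_eq_one_of_mem_center) h3 h3 θ
  obtain ⟨z, hz⟩ := exists_commTrace_eq_sq_sub h ρ
  exact ⟨z, by rw [← hz, commTrace, commTrace, commutatorElement_eq_of_mk_center_eq hA hB]⟩

end Lifting

section FiniteField

open Polynomial

variable {F : Type*} [Field F] [Finite F]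

theorem exists_eq_sq_add_sq (x : F) : ∃ u v, x = u ^ 2 + v ^ 2 := by
  have := Fintype.ofFinite F
  by_cases hF : ringChar F = 2
  · obtain ⟨u, rfl⟩ := FiniteField.isSquare_of_char_two hF x
    exact ⟨u, 0, by ring⟩
  · obtain ⟨u, v, h⟩ := FiniteField.exists_root_sum_quadratic (degree_X_pow (R := F) 2)
      (degree_X_pow_sub_C two_pos x) (FiniteField.odd_card_of_char_ne_two hF)
    refine ⟨u, v, ?_⟩
    simp only [eval_pow, eval_X, eval_sub, eval_C] at h
    linear_combination -h

theorem isSquare_mul_of_not_isSquare {x y : F} (hx : ¬IsSquare x) (hy : ¬IsSquare y) :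
    IsSquare (x * y) := by
  classical
  have := Fintype.ofFinite F
  rw [← quadraticChar_neg_one_iff_not_isSquare] at hx hy
  have hxy : quadraticChar F (x * y) = 1 := by rw [map_mul, hx, hy]; rfl
  by_contra h
  rw [← quadraticChar_neg_one_iff_not_isSquare, hxy] at h
  exact absurd h (by decide)

theorem exists_ne_zero_forall_quadratic_ne_zero (L : List (F × F))
    (hL : 2 * L.length + 1 < Nat.card F) :
    ∃ t ≠ 0, ∀ p ∈ L, t ^ 2 + p.1 * t + p.2 ≠ 0 := by
  let Q (p : F × F) : F[X] := X ^ 2 + C p.1 * X + C p.2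
  have hQ (p : F × F) : (Q p).natDegree = 2 := by simp only [Q]; compute_degree!
  have hne : X * (L.map Q).prod ≠ 0 := by
    refine mul_ne_zero X_ne_zero (List.prod_ne_zero fun h => ?_)
    obtain ⟨p, -, hp⟩ := List.mem_map.1 h
    simpa [hp] using hQ p
  have hdeg : (X * (L.map Q).prod).natDegree < Nat.card F :=
    calc _ ≤ 1 + ((L.map Q).map natDegree).sum :=
          natDegree_mul_le_of_le natDegree_X_le (natDegree_list_prod_le _)
      _ = 2 * L.length + 1 := by
          simp only [List.map_map, Function.comp_def, hQ, List.map_const', List.sum_replicate]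
          ring
      _ < Nat.card F := hL
  obtain ⟨t, ht⟩ := exists_eval_ne_zero_of_natDegree_lt_card _ hne (by
    rw [← Nat.cast_card]
    exact_mod_cast hdeg)
  rw [eval_mul, eval_X, eval_list_prod] at ht
  refine ⟨t, left_ne_zero_of_mul ht, fun p hp h0 => right_ne_zero_of_mul ht ?_⟩
  refine List.prod_eq_zero (List.mem_map.2 ⟨Q p, List.mem_map_of_mem hp, ?_⟩)
  simpa [Q] using h0

theorem exists_isPrimitiveRoot_card_sub_one : ∃ l : F, IsPrimitiveRoot l (Nat.card F - 1) := by
  obtain ⟨u, hu⟩ := IsCyclic.exists_generator (α := Fˣ)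
  refine ⟨u, ?_⟩
  rw [IsPrimitiveRoot.coe_units_iff, ← Nat.card_units, ← orderOf_eq_card_of_forall_mem_zpowers hu]
  exact IsPrimitiveRoot.orderOf u

theorem natCast_ne_zero_of_card_prime {n : ℕ} (hF : (Nat.card F).Prime) (hn : n ≠ 0)
    (hlt : n < Nat.card F) : (n : F) ≠ 0 := by
  have := Fintype.ofFinite F
  have := Fact.mk hF
  have : CharP F (Nat.card F) := charP_of_card_eq_prime Nat.card_eq_fintype_card.symm
  rw [Ne, CharP.cast_eq_zero_iff F (Nat.card F)]
  exact Nat.not_dvd_of_pos_of_lt (Nat.pos_of_ne_zero hn) hlt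

theorem card_prime_or_eq_nine_or (hF : 5 ≤ Nat.card F) : (Nat.card F).Prime ∨ Nat.card F = 9 ∨
    (ringChar F = 2 ∧ 8 ≤ Nat.card F) ∨ 14 ≤ Nat.card F := by
  have := Fintype.ofFinite F
  obtain ⟨n, hp, hn⟩ := FiniteField.card F (ringChar F)
  rw [← Nat.card_eq_fintype_card] at hn
  rcases hp.two_le.eq_or_lt with h2 | h2
  · refine Or.inr (Or.inr (Or.inl ⟨h2.symm, ?_⟩))
    rw [← h2] at hn
    have hn3 : 2 < (n : ℕ) := (Nat.pow_lt_pow_iff_right one_lt_two).1 (by omega)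
    exact hn ▸ Nat.pow_le_pow_right two_pos hn3
  · obtain hn1 | hn2 : (n : ℕ) = 1 ∨ 2 ≤ (n : ℕ) := by have := n.pos; omega
    · rw [hn1, pow_one] at hn
      exact Or.inl (hn ▸ hp)
    · right
      by_cases h32 : ringChar F = 3 ∧ (n : ℕ) = 2
      · exact Or.inl (by rw [hn, h32.1, h32.2]; norm_num)
      · refine Or.inr (Or.inr ?_)
        rw [hn]
        obtain hp4 | hn3 : 4 ≤ ringChar F ∨ 3 ≤ (n : ℕ) := by omega
        · calc 14 ≤ 4 ^ 2 := by norm_num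
            _ ≤ ringChar F ^ 2 := Nat.pow_le_pow_left hp4 2
            _ ≤ _ := Nat.pow_le_pow_right hp.pos hn2
        · calc 14 ≤ 3 ^ 3 := by norm_num
            _ ≤ ringChar F ^ 3 := Nat.pow_le_pow_left h2 3
            _ ≤ _ := Nat.pow_le_pow_right hp.pos hn3

theorem three_eq_zero_of_card_eq_nine (hF : Nat.card F = 9) : (3 : F) = 0 := by
  have h : ((9 : ℕ) : F) = 0 := by
    have := Fintype.ofFinite F
    rw [← hF, Nat.card_eq_fintype_card, FiniteField.cast_card_eq_zero]
  exact pow_eq_zero_iff two_ne_zero |>.1 (by push_cast at h; linear_combination h)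

theorem exists_forall_ne_sq_sub_self {R : Type*} [Ring R] [Nontrivial R] [Finite R] :
    ∃ t : R, ∀ z, t ≠ z ^ 2 - z := by
  by_contra! h
  have hsurj : Function.Surjective fun z : R => z ^ 2 - z := fun t => (h t).imp fun _ => Eq.symm
  exact zero_ne_one (Finite.injective_iff_surjective.2 hsurj (by simp))

theorem exists_not_isSquare_sq_add_sq (h2 : ringChar F ≠ 2) {a : F} (ha : a ≠ 0) :
    ∃ c, ¬IsSquare (c ^ 2 + a ^ 2) := by
  by_contra! h
  obtain ⟨x, hx⟩ := FiniteField.exists_nonsquare h2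
  obtain ⟨u, v, rfl⟩ := exists_eq_sq_add_sq x
  obtain rfl | hv := eq_or_ne v 0
  · exact hx ⟨u, by ring⟩
  · have e : u ^ 2 + v ^ 2 = (v / a) ^ 2 * ((a * u / v) ^ 2 + a ^ 2) := by field_simp
    exact hx (e ▸ (IsSquare.sq _).mul (h _))

theorem exists_forall_two_add_sq_ne_sq_sub_self (h2 : (2 : F) ≠ 0) (h3 : (3 : F) ≠ 0) :
    ∃ c : F, ∀ z, 2 + c ^ 2 ≠ z ^ 2 - z := by
  obtain ⟨c, hc⟩ := exists_not_isSquare_sq_add_sq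
    (fun h => h2 (by exact_mod_cast (ringChar.spec F 2).2 h.dvd)) h3
  refine ⟨c / 2, fun z hz => hc ⟨2 * z - 1, ?_⟩⟩
  field_simp at hz
  linear_combination hz

theorem exists_eq_sq_sub_self_of_isPrimitiveRoot_eight {F : Type*} [Field F] (h3 : (3 : F) = 0)
    {l t : F} (hl : IsPrimitiveRoot l 8)
    (h : ((2 - t) / (l - l⁻¹) ^ 2) ^ 3 = (2 - t) / (l - l⁻¹) ^ 2) : ∃ z, t = z ^ 2 - z := by
  have hl0 : l ≠ 0 := hl.ne_zero (by norm_num)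
  have hl4 : l ^ 4 = -1 :=
    (sq_eq_one_iff.1 (by rw [← pow_mul, hl.pow_eq_one])).resolve_left
      (hl.pow_ne_one_of_pos_of_lt (by norm_num) (by norm_num))
  have hone : (l - l⁻¹) ^ 2 = 1 := by
    field_simp
    linear_combination hl4 - l ^ 2 * h3
  have ht : t * (t - 1) * (t - 2) = 0 := by
    rw [hone, div_one] at h
    linear_combination -h + (t ^ 2 - 3 * t + 2) * h3
  rcases mul_eq_zero.1 ht with ht | ht
  · rcases mul_eq_zero.1 ht with ht | ht
    · exact ⟨0, by rw [ht]; ring⟩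
    · have hl2 : (l ^ 2 - l - 1) * (l ^ 2 + l - 1) = 0 := by
        linear_combination hl4 - l ^ 2 * h3
      rcases mul_eq_zero.1 hl2 with hl2 | hl2
      · exact ⟨l, by linear_combination ht - hl2⟩
      · exact ⟨-l, by linear_combination ht - hl2⟩
  · exact ⟨2, by linear_combination ht⟩

end FiniteField

section Generation

open Matrix
open Matrix.SpecialLinearGroup (transvection_coe)
open scoped MatrixGroups

theorem matrix_fin_two_congr {α : Type*} {a b c d a' b' c' d' : α} (ha : a = a')
    (hb : b = b') (hc : c = c') (hd : d = d') : !![a, b; c, d] = !![a', b'; c', d'] := by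
  rw [ha, hb, hc, hd]

/-- The submonoid of `2 × 2` matrices underlying a subgroup of `SL(2, R)`, so that a matrix given by
its entries can be said to lie in the subgroup without a proof that its determinant is `1`. -/
def coeSubmonoid {R : Type*} [CommRing R] (K : Subgroup SL(2, R)) :
    Submonoid (Matrix (Fin 2) (Fin 2) R) :=
  K.toSubmonoid.map Matrix.SpecialLinearGroup.coeMonoidHom

section CommRing

variable {R : Type*} [CommRing R] {K : Subgroup SL(2, R)} {a b c d : R}

theorem coe_mem_coeSubmonoid {A : SL(2, R)} : A.1 ∈ coeSubmonoid K ↔ A ∈ K :=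
  ⟨fun ⟨_, hB, h⟩ => Subtype.ext h ▸ hB, fun h => ⟨A, h, rfl⟩⟩

theorem left_mem_coeSubmonoid_closure_pair (A B : SL(2, R)) :
    A.1 ∈ coeSubmonoid (Subgroup.closure {A, B}) :=
  coe_mem_coeSubmonoid.2 (Subgroup.subset_closure (Set.mem_insert A {B}))

theorem right_mem_coeSubmonoid_closure_pair (A B : SL(2, R)) :
    B.1 ∈ coeSubmonoid (Subgroup.closure {A, B}) :=
  coe_mem_coeSubmonoid.2 (Subgroup.subset_closure (Set.mem_insert_of_mem A rfl))

theorem mul_sub_mul_eq_one_of_mem (h : !![a, b; c, d] ∈ coeSubmonoid K) : a * d - b * c = 1 := by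
  obtain ⟨A, -, hA⟩ := h
  rw [← det_fin_two_of, ← hA]
  exact A.2

theorem inv_mem_coeSubmonoid (h : !![a, b; c, d] ∈ coeSubmonoid K) :
    !![d, -b; -c, a] ∈ coeSubmonoid K := by
  obtain ⟨A, hA, e⟩ := h
  refine ⟨A⁻¹, K.inv_mem hA, ?_⟩
  rw [← adjugate_fin_two_of, ← e]
  exact Matrix.SpecialLinearGroup.coe_inv A

/-- The `x` for which the upper unitriangular matrix with off-diagonal entry `x` is in `K`. -/
def upperParameters (K : Subgroup SL(2, R)) : AddSubgroup R where
  carrier := {x | !![1, x; 0, 1] ∈ coeSubmonoid K}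
  zero_mem' := by
    rw [Set.mem_ofPred_eq, ← one_fin_two]
    exact one_mem _
  add_mem' {x y} hx hy := by
    have hmul : !![1, x; 0, 1] * !![1, y; 0, 1] ∈ coeSubmonoid K := mul_mem hx hy
    simpa [add_comm] using hmul
  neg_mem' hx := by simpa using inv_mem_coeSubmonoid hx

theorem mem_upperParameters {x : R} :
    x ∈ upperParameters K ↔ !![1, x; 0, 1] ∈ coeSubmonoid K := Iff.rfl

end CommRing

variable {F : Type*} [Field F] {K : Subgroup SL(2, F)} {a b c d x : F}

theorem weyl_mem_coeSubmonoid (hK : upperParameters K = ⊤) (h : !![a, b; c, d] ∈ coeSubmonoid K)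
    (hc : c ≠ 0) : !![0, -c⁻¹; c, 0] ∈ coeSubmonoid K := by
  have hU (x : F) : !![1, x; 0, 1] ∈ coeSubmonoid K := mem_upperParameters.1 (hK ▸ trivial)
  have hdet := mul_sub_mul_eq_one_of_mem h
  have hmul := mul_mem (mul_mem (hU (-a / c)) h) (hU (-d / c))
  rw [mul_fin_two, mul_fin_two] at hmul
  convert hmul using 1
  refine matrix_fin_two_congr ?_ ?_ ?_ ?_ <;> field_simp <;> grind

theorem eq_top_of_upperParameters_eq_top (hK : upperParameters K = ⊤)
    (h : !![a, b; c, d] ∈ coeSubmonoid K) (hc : c ≠ 0) : K = ⊤ := by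
  have hU (x : F) : !![1, x; 0, 1] ∈ coeSubmonoid K := mem_upperParameters.1 (hK ▸ trivial)
  have hW := weyl_mem_coeSubmonoid hK h hc
  have hL (y : F) : !![1, 0; y, 1] ∈ coeSubmonoid K := by
    have hmul := mul_mem (mul_mem hW (hU (-y / c ^ 2))) (inv_mem_coeSubmonoid hW)
    rw [mul_fin_two, mul_fin_two] at hmul
    convert hmul using 1
    refine matrix_fin_two_congr ?_ ?_ ?_ ?_ <;> field_simp <;> ring
  refine eq_top_iff.2 fun A _ => SL2.transvection_induction (· ∈ K) (fun i j hij x => ?_)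
    (fun _ _ => mul_mem) A
  rw [← coe_mem_coeSubmonoid, transvection_coe]
  fin_cases i <;> fin_cases j <;> try exact absurd rfl hij
  · convert hU x using 1
    ext i j
    fin_cases i <;> fin_cases j <;> simp
  · convert hL x using 1
    ext i j
    fin_cases i <;> fin_cases j <;> simp

theorem eq_top_of_card_prime (hF : (Nat.card F).Prime) (hx : x ≠ 0) (hxK : x ∈ upperParameters K)
    (h : !![a, b; c, d] ∈ coeSubmonoid K) (hc : c ≠ 0) : K = ⊤ := by
  have := Fact.mk hF
  refine eq_top_of_upperParameters_eq_top ?_ h hc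
  refine (upperParameters K).eq_bot_or_eq_top_of_prime_card.resolve_left fun hbot => hx ?_
  rwa [hbot, AddSubgroup.mem_bot] at hxK

end Generation

section Torus

open Matrix
open scoped MatrixGroups

variable {F : Type*} [Field F] {K : Subgroup SL(2, F)} {a b c d a' b' c' d' s t x : F}

/-- The subgroup `K` contains the diagonal torus of `SL(2, F)`. -/
def ContainsTorus (K : Subgroup SL(2, F)) : Prop :=
  ∀ t ≠ 0, !![t, 0; 0, t⁻¹] ∈ coeSubmonoid K

theorem containsTorus_of_isPrimitiveRoot [Finite F] (ht : IsPrimitiveRoot t (Nat.card F - 1))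
    (hD : !![t, 0; 0, t⁻¹] ∈ coeSubmonoid K) : ContainsTorus K := by
  have := Fintype.ofFinite F
  have hpow (n : ℕ) : !![t ^ n, 0; 0, (t ^ n)⁻¹] ∈ coeSubmonoid K := by
    have h := pow_mem hD n
    have e : !![t, 0; 0, t⁻¹] = diagonal ![t, t⁻¹] := by
      rw [diagonal_fin_two]
      rfl
    rw [e, diagonal_pow, diagonal_fin_two] at h
    simpa using h
  intro u hu
  have : NeZero (Nat.card F - 1) := ⟨(Nat.sub_pos_of_lt Finite.one_lt_card).ne'⟩
  obtain ⟨n, -, rfl⟩ := ht.eq_pow_of_pow_eq_one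
    (by simpa [Nat.card_eq_fintype_card] using FiniteField.pow_card_sub_one_eq_one u hu)
  exact hpow n

theorem mul_sq_mem_upperParameters (ht : t ≠ 0) (hD : !![t, 0; 0, t⁻¹] ∈ coeSubmonoid K)
    (hx : x ∈ upperParameters K) : x * t ^ 2 ∈ upperParameters K := by
  have h := mul_mem (mul_mem hD (mem_upperParameters.1 hx)) (inv_mem_coeSubmonoid hD)
  rw [mul_fin_two, mul_fin_two] at h
  rw [mem_upperParameters]
  convert h using 1
  refine matrix_fin_two_congr ?_ ?_ ?_ ?_ <;> field_simp <;> ring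

namespace ContainsTorus

variable (hT : ContainsTorus K)
include hT

theorem mul_diagonal_mul_mem (h : !![1, b; c, 1 + b * c] ∈ coeSubmonoid K) (ht : t ≠ 0) :
    !![t + b * c / t, b * (t + (1 + b * c) / t); c * (t + (1 + b * c) / t),
      b * c * t + (1 + b * c) ^ 2 / t] ∈ coeSubmonoid K := by
  have hmul := mul_mem h (mul_mem (hT t ht) h)
  rw [mul_fin_two, mul_fin_two] at hmul
  convert hmul using 1
  refine matrix_fin_two_congr ?_ ?_ ?_ ?_ <;> field_simp <;> ring

theorem inv_mul_mem_upperParameters (h : !![a, b; 0, d] ∈ coeSubmonoid K) :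
    a⁻¹ * b ∈ upperParameters K := by
  have hdet := mul_sub_mul_eq_one_of_mem h
  have ha : a ≠ 0 := by grind
  have hmul := mul_mem (hT a⁻¹ (inv_ne_zero ha)) h
  rw [mul_fin_two] at hmul
  rw [mem_upperParameters]
  convert hmul using 1
  refine matrix_fin_two_congr ?_ ?_ ?_ ?_ <;> field_simp <;> grind

variable [Finite F]

theorem upperParameters_eq_top (hx : x ≠ 0) (hxK : x ∈ upperParameters K) :
    upperParameters K = ⊤ := by
  have hsq (u : F) : x * u ^ 2 ∈ upperParameters K := by
    obtain rfl | hu := eq_or_ne u 0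
    · simp
    · exact mul_sq_mem_upperParameters hu (hT u hu) hxK
  refine (AddSubgroup.eq_top_iff' _).2 fun y => ?_
  obtain ⟨u, v, huv⟩ := exists_eq_sq_add_sq (y / x)
  have hy : y = x * u ^ 2 + x * v ^ 2 := by
    rw [← mul_add, ← huv, mul_div_cancel₀ y hx]
  exact hy ▸ add_mem (hsq u) (hsq v)

-- `τ` is chosen so that `h'⁻¹ * diag(τ, τ⁻¹) * h` is upper triangular.
theorem eq_top_of_isSquare_of_mul_ne_mul (h : !![a, b; c, d] ∈ coeSubmonoid K)
    (h' : !![a', b'; c', d'] ∈ coeSubmonoid K) (hsq : IsSquare (a * c * (a' * c')))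
    (h0 : a * c * (a' * c') ≠ 0) (hne : b * c ≠ b' * c') : K = ⊤ := by
  obtain ⟨r, hr⟩ := hsq
  have hdet := mul_sub_mul_eq_one_of_mem h
  have hdet' := mul_sub_mul_eq_one_of_mem h'
  obtain ⟨⟨ha, hc⟩, ha', hc'⟩ : (a ≠ 0 ∧ c ≠ 0) ∧ a' ≠ 0 ∧ c' ≠ 0 := by
    simpa only [mul_ne_zero_iff] using h0
  obtain ⟨τ, hτ, hτr⟩ : ∃ τ, τ ≠ 0 ∧ τ ^ 2 * a * c' = a' * c :=
    ⟨r / (a * c'), by grind, by field_simp; grind⟩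
  have hmul := mul_mem (inv_mem_coeSubmonoid h') (mul_mem (hT τ hτ) h)
  rw [mul_fin_two, mul_fin_two] at hmul
  have hlow : -c' * (τ * a + 0 * c) + a' * (0 * a + τ⁻¹ * c) = 0 := by
    field_simp
    linear_combination -hτr
  rw [hlow] at hmul
  have hx := hT.inv_mul_mem_upperParameters hmul
  have hdet'' := mul_sub_mul_eq_one_of_mem hmul
  refine eq_top_of_upperParameters_eq_top (hT.upperParameters_eq_top (mul_ne_zero ?_ ?_) hx) h hc
  · exact inv_ne_zero fun hα => one_ne_zero (by rw [← hdet'', hα, zero_mul, mul_zero, sub_zero])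
  · intro hβ
    have hτd : τ ^ 2 * b * d' = b' * d := by
      field_simp at hβ
      linear_combination hβ
    refine hne (mul_left_cancel₀ (pow_ne_zero 2 hτ) ?_)
    linear_combination
      a' * c * hτd - b' * d * hτr - τ ^ 2 * b * c * hdet' + τ ^ 2 * b' * c' * hdet

variable (hb : b ≠ 0) (hc : c ≠ 0) (h : !![1, b; c, d] ∈ coeSubmonoid K)
include hb hc h

theorem eq_top_of_isSquare (hs : s = b * c) (ht : t ≠ 0)
    (hsq : IsSquare ((t ^ 2 + s) * (t ^ 2 + 1 + s))) (h0 : (t ^ 2 + s) * (t ^ 2 + 1 + s) ≠ 0)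
    (hne : (t ^ 2 + 1 + s) ^ 2 ≠ t ^ 2) : K = ⊤ := by
  obtain rfl : d = 1 + b * c := by linear_combination mul_sub_mul_eq_one_of_mem h
  subst hs
  have key : 1 * c * ((t + b * c / t) * (c * (t + (1 + b * c) / t))) =
      (c / t) ^ 2 * ((t ^ 2 + b * c) * (t ^ 2 + 1 + b * c)) := by
    field_simp
    ring
  refine hT.eq_top_of_isSquare_of_mul_ne_mul h (hT.mul_diagonal_mul_mem h ht) ?_ ?_ fun heq => ?_
  · exact key ▸ (IsSquare.sq _).mul hsq
  · exact key ▸ mul_ne_zero (pow_ne_zero 2 (div_ne_zero hc ht)) h0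
  · apply hne
    field_simp at heq
    grind

theorem eq_top_of_isSquare_mul {u : F} (hs : s = b * c) (ht : t ≠ 0) (hu : u ≠ 0)
    (hsq : IsSquare ((t ^ 2 + s) * (t ^ 2 + 1 + s) * ((u ^ 2 + s) * (u ^ 2 + 1 + s))))
    (h0 : (t ^ 2 + s) * (t ^ 2 + 1 + s) * ((u ^ 2 + s) * (u ^ 2 + 1 + s)) ≠ 0)
    (hne : (t + (1 + s) / t) ^ 2 ≠ (u + (1 + s) / u) ^ 2) : K = ⊤ := by
  obtain rfl : d = 1 + b * c := by linear_combination mul_sub_mul_eq_one_of_mem h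
  subst hs
  have key : (t + b * c / t) * (c * (t + (1 + b * c) / t)) *
      ((u + b * c / u) * (c * (u + (1 + b * c) / u))) = (c / (t * u)) ^ 2 *
      ((t ^ 2 + b * c) * (t ^ 2 + 1 + b * c) * ((u ^ 2 + b * c) * (u ^ 2 + 1 + b * c))) := by
    field_simp
    ring
  refine hT.eq_top_of_isSquare_of_mul_ne_mul (hT.mul_diagonal_mul_mem h ht)
    (hT.mul_diagonal_mul_mem h hu) ?_ ?_ fun heq => hne ?_
  · exact key ▸ (IsSquare.sq _).mul hsq
  · exact key ▸ mul_ne_zero (pow_ne_zero 2 (div_ne_zero hc (mul_ne_zero ht hu))) h0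
  · exact mul_left_cancel₀ (mul_ne_zero hb hc) (by linear_combination heq)

theorem eq_top_of_ringChar_eq_two (h2 : ringChar F = 2) (hF : 8 ≤ Nat.card F) : K = ⊤ := by
  have : CharP F 2 := ringChar.of_eq h2
  obtain ⟨t, ht, hL⟩ := exists_ne_zero_forall_quadratic_ne_zero
    [(0, b * c), (0, 1 + b * c), (1, 1 + b * c)]
    (by simp only [List.length_cons, List.length_nil]; omega)
  simp only [List.forall_mem_cons] at hL
  obtain ⟨h₁, h₂, h₃, -⟩ := hL
  refine hT.eq_top_of_isSquare hb hc h rfl ht (FiniteField.isSquare_of_char_two h2 _)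
    (mul_ne_zero ?_ ?_) ?_
  · simpa using h₁
  · simpa [add_assoc] using h₂
  · rw [← sub_ne_zero, sq_sub_sq, CharTwo.sub_eq_add, ← sq]
    exact pow_ne_zero 2 (by convert h₃ using 1; ring)

theorem eq_top_of_fourteen_le_card (hF : 14 ≤ Nat.card F) : K = ⊤ := by
  by_contra hK
  let L : List (F × F) := [(0, b * c), (0, 1 + b * c), (1, 1 + b * c), (-1, 1 + b * c)]
  have hL {t : F} (ht : t ≠ 0) (htL : ∀ p ∈ L, t ^ 2 + p.1 * t + p.2 ≠ 0) :
      (t ^ 2 + b * c) * (t ^ 2 + 1 + b * c) ≠ 0 ∧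
        ¬IsSquare ((t ^ 2 + b * c) * (t ^ 2 + 1 + b * c)) := by
    simp only [L, List.forall_mem_cons] at htL
    obtain ⟨h₁, h₂, h₃, h₄, -⟩ := htL
    have h0 : (t ^ 2 + b * c) * (t ^ 2 + 1 + b * c) ≠ 0 := by grind
    exact ⟨h0, fun hsq => hK (hT.eq_top_of_isSquare hb hc h rfl ht hsq h0 (by grind))⟩
  obtain ⟨t, ht, htL⟩ := exists_ne_zero_forall_quadratic_ne_zero L
    (by simp only [L, List.length_cons, List.length_nil]; omega)
  set v := t + (1 + b * c) / t with hv
  obtain ⟨u, hu, huL⟩ := exists_ne_zero_forall_quadratic_ne_zero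
    (L ++ [(v, 1 + b * c), (-v, 1 + b * c)])
    (by simp only [L, List.length_append, List.length_cons, List.length_nil]; omega)
  obtain ⟨huL, huv⟩ := List.forall_mem_append.1 huL
  simp only [List.forall_mem_cons] at huv
  obtain ⟨ht0, htsq⟩ := hL ht htL
  obtain ⟨hu0, husq⟩ := hL hu huL
  refine hK (hT.eq_top_of_isSquare_mul hb hc h rfl ht hu (isSquare_mul_of_not_isSquare htsq husq)
    (mul_ne_zero ht0 hu0) fun heq => ?_)
  rw [← hv, sq_eq_sq_iff_eq_or_eq_neg] at heq
  rcases heq with heq | heq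
  · refine huv.2.1 ?_
    field_simp at heq
    grind
  · refine huv.1 ?_
    field_simp at heq
    grind

theorem eq_top_of_card_eq_nine (hF : Nat.card F = 9) (hs : (b * c) ^ 3 ≠ b * c) : K = ⊤ := by
  have := Fintype.ofFinite F
  have h3 : (3 : F) = 0 := three_eq_zero_of_card_eq_nine hF
  have h9 : (b * c) ^ 9 = b * c := by
    rw [← hF, Nat.card_eq_fintype_card, FiniteField.pow_card]
  have hs0 : b * c ≠ 0 := mul_ne_zero hb hc
  generalize hsbc : b * c = s at h9 hs hs0
  have hmin : (s ^ 2 + 1) * (s ^ 2 + s - 1) * (s ^ 2 - s - 1) = 0 := by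
    refine (mul_eq_zero.1 ?_).resolve_left (sub_ne_zero.2 hs)
    grind
  have key {t : F} (ht : t ≠ 0) (h1 : (t ^ 2 + s) * (t ^ 2 + 1 + s) = 1)
      (hne : (t ^ 2 + 1 + s) ^ 2 ≠ t ^ 2) : K = ⊤ :=
    hT.eq_top_of_isSquare hb hc h hsbc.symm ht (by rw [h1]; exact IsSquare.one)
      (by rw [h1]; exact one_ne_zero) hne
  rcases mul_eq_zero.1 hmin with hmin | hmin
  · rcases mul_eq_zero.1 hmin with hmin | hmin
    · exact key one_ne_zero (by grind) (by grind)
    · exact key (pow_ne_zero 3 hs0) (by grind) (by grind)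
  · exact key (pow_ne_zero 2 hs0) (by grind) (by grind)

theorem eq_top_of_not_prime_card (hF : 5 ≤ Nat.card F) (hprime : ¬(Nat.card F).Prime)
    (hs : Nat.card F = 9 → (b * c) ^ 3 ≠ b * c) : K = ⊤ := by
  obtain h9 | ⟨h2, h8⟩ | h14 := (card_prime_or_eq_nine_or hF).resolve_left hprime
  · exact hT.eq_top_of_card_eq_nine hb hc h h9 (hs h9)
  · exact hT.eq_top_of_ringChar_eq_two hb hc h h2 h8
  · exact hT.eq_top_of_fourteen_le_card hb hc h h14

end ContainsTorus

end Torus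

section OrderThreePairs

open Matrix
open Matrix.SpecialLinearGroup (coe_mul)
open scoped MatrixGroups

variable {F : Type*} [Field F]

theorem closure_traceNegOne_zero_one_eq_top (hF : (Nat.card F).Prime) (h4 : (4 : F) ≠ 0) :
    Subgroup.closure {traceNegOne (0 : F), traceNegOne 1} = ⊤ := by
  have hA := left_mem_coeSubmonoid_closure_pair (traceNegOne (0 : F)) (traceNegOne 1)
  have hB := right_mem_coeSubmonoid_closure_pair (traceNegOne (0 : F)) (traceNegOne 1)
  rw [coe_traceNegOne] at hA hB
  refine eq_top_of_card_prime hF (neg_ne_zero.2 h4) (mem_upperParameters.2 ?_) hA one_ne_zero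
  have hmul := pow_mem (mul_mem hA hB) 2
  rw [mul_fin_two, sq, mul_fin_two] at hmul
  convert hmul using 1
  refine matrix_fin_two_congr ?_ ?_ ?_ ?_ <;> norm_num

theorem exists_pow_three_eq_one_mul_eq_diagonal {l : F} (hl : l ≠ 0) (hl1 : l + 1 ≠ 0) :
    ∃ B : SL(2, F), B ^ 3 = 1 ∧
      (traceNegOne (-l / (l + 1)) * B).1 = !![l, 0; 0, l⁻¹] := by
  let D : SL(2, F) := ⟨!![l, 0; 0, l⁻¹], by rw [det_fin_two_of]; field_simp; simp⟩
  refine ⟨(traceNegOne (-l / (l + 1)))⁻¹ * D, pow_three_eq_one_of_trace_eq_neg_one ?_, ?_⟩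
  · rw [coe_mul, Matrix.SpecialLinearGroup.coe_inv, traceNegOne, adjugate_fin_two_of, mul_fin_two,
      trace_fin_two_of]
    field_simp
    ring
  · rw [mul_inv_cancel_left]

theorem closure_eq_top_of_mul_eq_diagonal [Finite F] (hF : 5 ≤ Nat.card F)
    (hprime : ¬(Nat.card F).Prime) {l : F} (hl : IsPrimitiveRoot l (Nat.card F - 1))
    {B : SL(2, F)} (hB : (traceNegOne (-l / (l + 1)) * B).1 = !![l, 0; 0, l⁻¹]) :
    Subgroup.closure {traceNegOne (-l / (l + 1)), B} = ⊤ := by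
  have hl0 : l ≠ 0 := hl.ne_zero (by omega)
  have hl1 : l + 1 ≠ 0 := fun h => hl.pow_ne_one_of_pos_of_lt two_ne_zero (by omega) (by grind)
  have hl3 : l ^ 2 + l + 1 ≠ 0 :=
    fun h => hl.pow_ne_one_of_pos_of_lt three_ne_zero (by omega) (by grind)
  have hA := left_mem_coeSubmonoid_closure_pair (traceNegOne (-l / (l + 1))) B
  have hAB := mul_mem hA (right_mem_coeSubmonoid_closure_pair (traceNegOne (-l / (l + 1))) B)
  rw [← coe_mul, hB] at hAB
  have hT := containsTorus_of_isPrimitiveRoot hl hAB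
  have hp : -l / (l + 1) ≠ 0 := div_ne_zero (neg_ne_zero.2 hl0) hl1
  have hs : (-l / (l + 1)) ^ 2 + -l / (l + 1) + 1 = (l ^ 2 + l + 1) / (l + 1) ^ 2 := by
    field_simp
    ring
  generalize -l / (l + 1) = p at *
  have hM := mul_mem (hT p⁻¹ (inv_ne_zero hp)) hA
  rw [coe_traceNegOne, mul_fin_two, hs] at hM
  simp only [inv_mul_cancel₀ hp, inv_inv, zero_mul, add_zero, zero_add, mul_one] at hM
  have hq : (l ^ 2 + l + 1) / (l + 1) ^ 2 ≠ 0 := div_ne_zero hl3 (pow_ne_zero 2 hl1)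
  refine hT.eq_top_of_not_prime_card
    (mul_ne_zero (inv_ne_zero hp) (neg_ne_zero.2 hq)) hp hM hF hprime fun h9 h => ?_
  have h3 := three_eq_zero_of_card_eq_nine h9
  refine hl.pow_ne_one_of_pos_of_lt four_ne_zero (by omega) ?_
  have hsq : (l ^ 2 + l + 1) ^ 2 = ((l + 1) ^ 2) ^ 2 := by
    rw [mul_neg, neg_mul, mul_right_comm, inv_mul_cancel₀ hp, one_mul] at h
    field_simp at h
    grind
  have hl21 : l ^ 2 + 1 = 0 := by
    have : l * (l ^ 2 + 1) = 0 := by grind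
    exact (mul_eq_zero.1 this).resolve_left hl0
  grind

theorem exists_pow_three_eq_one_closure_eq_top [Finite F] (hF : 5 ≤ Nat.card F) :
    ∃ A B : SL(2, F), A ^ 3 = 1 ∧ B ^ 3 = 1 ∧ Subgroup.closure {A, B} = ⊤ := by
  by_cases hprime : (Nat.card F).Prime
  · have h4 : (4 : F) ≠ 0 := by
      exact_mod_cast natCast_ne_zero_of_card_prime hprime four_ne_zero (by omega)
    exact ⟨_, _, traceNegOne_pow_three 0, traceNegOne_pow_three 1,
      closure_traceNegOne_zero_one_eq_top hprime h4⟩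
  · obtain ⟨l, hl⟩ := exists_isPrimitiveRoot_card_sub_one (F := F)
    have hl0 : l ≠ 0 := hl.ne_zero (by omega)
    have hl1 : l + 1 ≠ 0 := fun h => hl.pow_ne_one_of_pos_of_lt two_ne_zero (by omega) (by grind)
    obtain ⟨B, hB3, hB⟩ := exists_pow_three_eq_one_mul_eq_diagonal hl0 hl1
    exact ⟨_, B, traceNegOne_pow_three _, hB3, closure_eq_top_of_mul_eq_diagonal hF hprime hl hB⟩

end OrderThreePairs

section CommTrace

open Matrix
open Matrix.SpecialLinearGroup (coe_mul)
open scoped MatrixGroups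

variable {F : Type*} [Field F]

theorem commTrace_unitriangular_weyl {c : F} (hc : c ≠ 0) {A B : SL(2, F)}
    (hA : A.1 = !![1, 1; 0, 1]) (hB : B.1 = !![0, -c⁻¹; c, 0]) :
    commTrace A B = 2 + c ^ 2 := by
  rw [commTrace_eq, coe_mul, hA, hB, mul_fin_two, trace_fin_two_of, trace_fin_two_of,
    trace_fin_two_of]
  field_simp
  ring

theorem commTrace_diagonal {l s : F} (hl : l ≠ 0) {A B : SL(2, F)}
    (hA : A.1 = !![l, 0; 0, l⁻¹]) (hB : B.1 = !![1, 1; s, 1 + s]) :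
    commTrace A B = 2 - s * (l - l⁻¹) ^ 2 := by
  rw [commTrace_eq, coe_mul, hA, hB, mul_fin_two, trace_fin_two_of, trace_fin_two_of,
    trace_fin_two_of]
  field_simp
  ring

variable [Finite F]

theorem exists_closure_eq_top_commTrace_ne_of_card_prime (hF : 5 ≤ Nat.card F)
    (hprime : (Nat.card F).Prime) : ∃ A B : SL(2, F), Subgroup.closure {A, B} = ⊤ ∧
      ∀ z, commTrace A B ≠ z ^ 2 - z := by
  have h2 : (2 : F) ≠ 0 := by
    exact_mod_cast natCast_ne_zero_of_card_prime hprime two_ne_zero (by omega)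
  have h3 : (3 : F) ≠ 0 := by
    exact_mod_cast natCast_ne_zero_of_card_prime hprime three_ne_zero (by omega)
  obtain ⟨c, hc⟩ := exists_forall_two_add_sq_ne_sq_sub_self h2 h3
  have hc0 : c ≠ 0 := by
    rintro rfl
    exact hc 2 (by ring)
  let A : SL(2, F) := ⟨!![1, 1; 0, 1], by rw [det_fin_two_of]; ring⟩
  let B : SL(2, F) := ⟨!![0, -c⁻¹; c, 0], by rw [det_fin_two_of]; field_simp; ring⟩
  refine ⟨A, B, eq_top_of_card_prime hprime one_ne_zero ?_
    (right_mem_coeSubmonoid_closure_pair A B) hc0, ?_⟩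
  · exact mem_upperParameters.2 (left_mem_coeSubmonoid_closure_pair A B)
  · rwa [commTrace_unitriangular_weyl hc0 rfl rfl]

theorem exists_closure_eq_top_commTrace_ne_of_not_prime_card (hF : 5 ≤ Nat.card F)
    (hprime : ¬(Nat.card F).Prime) : ∃ A B : SL(2, F), Subgroup.closure {A, B} = ⊤ ∧
      ∀ z, commTrace A B ≠ z ^ 2 - z := by
  obtain ⟨l, hl⟩ := exists_isPrimitiveRoot_card_sub_one (F := F)
  obtain ⟨t, ht⟩ := exists_forall_ne_sq_sub_self (R := F)
  have hl0 : l ≠ 0 := hl.ne_zero (by omega)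
  have hl2 : l ^ 2 ≠ 1 := hl.pow_ne_one_of_pos_of_lt two_ne_zero (by omega)
  have hinv : l - l⁻¹ ≠ 0 :=
    fun h => hl2 (by rwa [sq, mul_eq_one_iff_eq_inv₀ hl0, ← sub_eq_zero])
  have hs0 : (2 - t) / (l - l⁻¹) ^ 2 ≠ 0 :=
    div_ne_zero (fun h => ht 2 (by linear_combination -h)) (pow_ne_zero 2 hinv)
  have hst : 2 - (2 - t) / (l - l⁻¹) ^ 2 * (l - l⁻¹) ^ 2 = t := by
    rw [div_mul_cancel₀ _ (pow_ne_zero 2 hinv), sub_sub_cancel]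
  generalize hs : (2 - t) / (l - l⁻¹) ^ 2 = s at *
  let A : SL(2, F) := ⟨!![l, 0; 0, l⁻¹], by rw [det_fin_two_of]; field_simp; ring⟩
  let B : SL(2, F) := ⟨!![1, 1; s, 1 + s], by rw [det_fin_two_of]; ring⟩
  refine ⟨A, B, (containsTorus_of_isPrimitiveRoot hl
    (left_mem_coeSubmonoid_closure_pair A B)).eq_top_of_not_prime_card one_ne_zero hs0
    (right_mem_coeSubmonoid_closure_pair A B) hF hprime fun h9 hcube => ?_, ?_⟩
  · rw [one_mul, ← hs] at hcube
    rw [h9] at hl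
    exact (exists_eq_sq_sub_self_of_isPrimitiveRoot_eight
      (three_eq_zero_of_card_eq_nine h9) hl hcube).elim ht
  · rwa [commTrace_diagonal hl0 rfl rfl, hst]

theorem exists_closure_eq_top_commTrace_ne (hF : 5 ≤ Nat.card F) :
    ∃ A B : SL(2, F), Subgroup.closure {A, B} = ⊤ ∧ ∀ z, commTrace A B ≠ z ^ 2 - z := by
  by_cases hprime : (Nat.card F).Prime
  · exact exists_closure_eq_top_commTrace_ne_of_card_prime hF hprime
  · exact exists_closure_eq_top_commTrace_ne_of_not_prime_card hF hprime

end CommTrace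

/-- for `G = C_3 ∗ C_3` and `H = PSL(2,q)` with `q ≥ 5`, the group `H`
is a homomorphic image of `G`, and some generating pair of `H` does not lift to a
generating pair of `G` along any homomorphism `G → H`. -/
theorem stmt3 (q : ℕ) (F : Type) [Field F] [Fintype F] (hcard : Fintype.card F = q)
    (hq5 : 5 ≤ q) :
    (∃ φ : Monoid.Coprod (Cyc 3) (Cyc 3) →* PSL2 F, Function.Surjective φ) ∧
    ∃ h1 h2 : PSL2 F, Subgroup.closure {h1, h2} = ⊤ ∧
      ∀ (θ : Monoid.Coprod (Cyc 3) (Cyc 3) →* PSL2 F)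
        (g1 g2 : Monoid.Coprod (Cyc 3) (Cyc 3)),
        Subgroup.closure {g1, g2} = ⊤ → (θ g1, θ g2) ≠ (h1, h2) := by
  have hF : 5 ≤ Nat.card F := by rwa [Nat.card_eq_fintype_card, hcard]
  refine ⟨?_, ?_⟩
  · obtain ⟨A, B, hA, hB, htop⟩ := exists_pow_three_eq_one_closure_eq_top hF
    exact ⟨(QuotientGroup.mk' _).comp (coprodCycLift A B hA hB),
      (QuotientGroup.mk'_surjective _).comp (surjective_coprodCycLift hA hB htop)⟩
  · obtain ⟨A, B, htop, hne⟩ := exists_closure_eq_top_commTrace_ne hF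
    refine ⟨A, B, closure_mk_pair_eq_top htop, fun θ g1 g2 hg h => ?_⟩
    obtain ⟨hA, hB⟩ := Prod.mk.inj h
    obtain ⟨z, hz⟩ := exists_commTrace_eq_sq_sub_of_mk_eq hg θ hA hB
    exact hne z hz
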